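/- The Lemke graph L satisfies π(L) = 8 and π₂(L, 5) = 14 > 2·π(L) − 5 + 1 = 12; consequently L does not have the 2-pebbling property. -/

import Mathlib

open SimpleGraph Finset

/-- A single pebbling move on `G`: remove two pebbles from a vertex `v` with at least two
pebbles and add one pebble to an adjacent vertex `w`. -/
def PebblingMove {V : Type*} (G : SimpleGraph V) (c c' : V → ℕ) : Prop :=
  ∃ v w, G.Adj v w ∧ 2 ≤ c v ∧ c' v = c v - 2 ∧ c' w = c w + 1 ∧
    ∀ u, u ≠ v → u ≠ w → c' u = c u

/-- Some finite sequence of pebbling moves starting from `c` places at least `t` pebbles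
on the vertex `r`. -/
def NSolvable {V : Type*} (G : SimpleGraph V) (c : V → ℕ) (r : V) (t : ℕ) : Prop :=
  ∃ c', Relation.ReflTransGen (PebblingMove G) c c' ∧ t ≤ c' r

/-- A configuration `c` is `r`-solvable. -/
def Solvable {V : Type*} (G : SimpleGraph V) (c : V → ℕ) (r : V) : Prop :=
  NSolvable G c r 1

/-- The pebbling number `π(G)`: least `k` such that every configuration of size `k` is
`r`-solvable for every root `r`. -/
noncomputable def pebblingNumber {V : Type*} (G : SimpleGraph V) [Fintype V] : ℕ :=
  sInf {k | ∀ c : V → ℕ, (∑ v, c v) = k → ∀ r, Solvable G c r}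

/-- The 2-pebbling number `π₂(G, s)`: least `m` such that for every root `r`, every
configuration of size at least `m` with support of size exactly `s` can place two pebbles
on `r`. -/
noncomputable def twoPebblingNumber {V : Type*} (G : SimpleGraph V) [Fintype V] (s : ℕ) : ℕ :=
  sInf {m | ∀ (r : V) (c : V → ℕ), m ≤ ∑ v, c v →
    (Finset.univ.filter fun v => 1 ≤ c v).card = s → NSolvable G c r 2}

/-- The Lemke graph `L` on vertices `v1, …, v8` (as `0, …, 7`). -/
def lemkeL : SimpleGraph (Fin 8) :=
  SimpleGraph.fromRel fun a b =>
    (a, b) ∈ ([(0, 1), (0, 2), (1, 3), (2, 4), (2, 5), (2, 6), (3, 4), (3, 5), (3, 6),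
      (3, 7), (4, 7), (5, 7), (6, 7)] : List (Fin 8 × Fin 8))

/-- `G` has the 2-pebbling property: `π₂(G, s) ≤ 2π(G) - s + 1` for all
`s ∈ {1, …, |V(G)|}`. -/
def HasTwoPebblingProperty {V : Type*} (G : SimpleGraph V) [Fintype V] : Prop :=
  ∀ s, 1 ≤ s → s ≤ Fintype.card V →
    twoPebblingNumber G s ≤ 2 * pebblingNumber G - s + 1

/-!
For a root other than `0`, an unsolvable configuration on the Lemke graph has at most 7 pebbles by
Hurlbert's weight function lemma, applied to several weight functions at once. For the root `0`
weight functions alone are not sufficient: the pebbles on `3` and `7` also have to be distributed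
over two of the vertices `4`, `5`, `6`, so as to repair the parity of both piles.

A pebbling move destroys one pebble. Hence, if 14 pebbles reach the root within five moves, then at
least `π(L) = 8` pebbles remain besides the one on the root, and they bring a second pebble there.
With 14 pebbles on five vertices, five moves are always sufficient.

Conversely, one pebble on each of `3`, `4`, `5`, `6` and nine on `7` do not bring two pebbles to
`0`: their distance weight is so tight that only moves towards the root are possible, and there
are not enough pebbles on `7` to make up for the odd piles.
-/

open Relation

section Moves

variable {V : Type*} {G : SimpleGraph V} {c c' : V → ℕ} {u v r : V} {m t : ℕ}

lemma solvable_of_pos (h : 1 ≤ c r) : Solvable G c r :=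
  ⟨c, .refl, h⟩

section DecidableEq

variable [DecidableEq V]

/-- The configuration reached from `c` by performing `m` pebbling moves from `u` to `v`. It is
meaningful when `u ≠ v` and `2 * m ≤ c u`, since the subtraction is truncated. -/
def moveMany (c : V → ℕ) (u v : V) (m : ℕ) : V → ℕ :=
  c + Pi.single v m - Pi.single u (2 * m)

lemma moveMany_add_single (h : u ≠ v) (hm : 2 * m ≤ c u) :
    moveMany c u v m + Pi.single u (2 * m) = c + Pi.single v m := by
  refine tsub_add_cancel_of_le fun x => ?_
  rcases eq_or_ne x u with rfl | hx
  · simpa [h] using hm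
  · simp [hx]

lemma pebblingMove_iff :
    PebblingMove G c c' ↔ ∃ u v, G.Adj u v ∧ 2 ≤ c u ∧ c' = moveMany c u v 1 := by
  refine exists_congr fun u => exists_congr fun v => and_congr_right fun huv =>
    and_congr_right fun _ => ⟨fun ⟨hu, hv, h⟩ => funext fun x => ?_, ?_⟩
  · rcases eq_or_ne x u with rfl | hxu
    · simp [moveMany, hu, huv.ne]
    rcases eq_or_ne x v with rfl | hxv
    · simp [moveMany, hv, hxu]
    · simp [moveMany, h x hxu hxv, hxu, hxv]
  · rintro rfl
    exact ⟨by simp [moveMany, huv.ne], by simp [moveMany, huv.ne'],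
      fun x hxu hxv => by simp [moveMany, hxu, hxv]⟩

lemma reflTransGen_moveMany (h : G.Adj u v) (hm : 2 * m ≤ c u) :
    ReflTransGen (PebblingMove G) c (moveMany c u v m) := by
  induction m with
  | zero => simpa [moveMany] using ReflTransGen.refl
  | succ m ih =>
    refine (ih (by lia)).tail (pebblingMove_iff.2 ⟨u, v, h, ?_, funext fun x => ?_⟩)
    · simp only [moveMany, Pi.sub_apply, Pi.add_apply, Pi.single_apply, h.ne, if_true, if_false]
      lia
    · simp only [moveMany, Pi.sub_apply, Pi.add_apply, Pi.single_apply]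
      split_ifs <;> lia

lemma sum_mul_moveMany [Fintype V] (f : V → ℕ) (h : u ≠ v) (hm : 2 * m ≤ c u) :
    ∑ x, f x * moveMany c u v m x + f u * (2 * m) = ∑ x, f x * c x + f v * m := by
  simpa [mul_add, sum_add_distrib, Pi.single_apply] using
    congrArg (fun d : V → ℕ => ∑ x, f x * d x) (moveMany_add_single h hm)

lemma sum_moveMany [Fintype V] (h : u ≠ v) (hm : 2 * m ≤ c u) :
    ∑ x, moveMany c u v m x + m = ∑ x, c x := by
  have := sum_mul_moveMany 1 h hm
  simp only [Pi.one_apply, one_mul] at this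
  lia

lemma NSolvable.of_moveMany (h : NSolvable G (moveMany c u v m) r t) (huv : G.Adj u v)
    (hm : 2 * m ≤ c u) : NSolvable G c r t :=
  let ⟨d, hd, ht⟩ := h
  ⟨d, (reflTransGen_moveMany huv hm).trans hd, ht⟩

end DecidableEq

lemma reflTransGen_pebblingMove_add_right (h : ReflTransGen (PebblingMove G) c c') (d : V → ℕ) :
    ReflTransGen (PebblingMove G) (c + d) (c' + d) := by
  classical
  refine h.lift (· + d) fun a b hab => ?_
  obtain ⟨u, v, huv, hu, rfl⟩ := pebblingMove_iff.1 hab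
  refine pebblingMove_iff.2 ⟨u, v, huv, le_add_right hu, ?_⟩
  rw [← add_left_inj (Pi.single u (2 * 1)), add_right_comm, moveMany_add_single huv.ne hu,
    moveMany_add_single huv.ne (le_add_right hu), add_right_comm]

lemma sum_mul_le_of_reflTransGen [Fintype V] {w : V → ℕ}
    (hw : ∀ u v, G.Adj u v → w v ≤ 2 * w u) (h : ReflTransGen (PebblingMove G) c c') :
    ∑ x, w x * c' x ≤ ∑ x, w x * c x := by
  classical
  induction h with
  | refl => rfl
  | tail _ hmove ih =>
    obtain ⟨u, v, huv, hu, rfl⟩ := pebblingMove_iff.1 hmove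
    have := sum_mul_moveMany w (m := 1) huv.ne hu
    have := hw u v huv
    lia

-- A move from `u` to `v` wastes the weight `2 * w u - w v`; a total loss below `t` rules out every
-- move wasting at least `t`. Here `n u v` counts the moves from `u` to `v`, in whatever order.
theorem exists_tight_flow [Fintype V] {w : V → ℕ}
    (hw : ∀ u v, G.Adj u v → w v = 2 * w u ∨ w v + t ≤ 2 * w u)
    (h : ReflTransGen (PebblingMove G) c c') (hlt : ∑ x, w x * c x < ∑ x, w x * c' x + t) :
    ∃ n : V → V → ℕ, (∀ u v, ¬ (G.Adj u v ∧ w v = 2 * w u) → n u v = 0) ∧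
      ∀ x, c' x + 2 * ∑ v, n x v = c x + ∑ u, n u x := by
  classical
  induction h with
  | refl => exact ⟨0, by simp⟩
  | tail hreach hmove ih =>
    obtain ⟨u, v, huv, hu, rfl⟩ := pebblingMove_iff.1 hmove
    have hweight := sum_mul_moveMany w (m := 1) huv.ne hu
    have hle := sum_mul_le_of_reflTransGen (w := w)
      (fun a b hab => by have := hw a b hab; lia) hreach
    have htight : w v = 2 * w u := by have := hw u v huv; lia
    obtain ⟨n, hn, hbal⟩ := ih (by lia)
    refine ⟨n + Pi.single u (Pi.single v 1), fun a b hab => ?_, fun x => ?_⟩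
    · rw [Pi.add_apply, Pi.add_apply, hn a b hab]
      rcases eq_or_ne a u with rfl | ha
      · have : b ≠ v := by rintro rfl; exact hab ⟨huv, htight⟩
        simp [this]
      · simp [ha]
    · have hmv := congrFun (moveMany_add_single huv.ne (m := 1) hu) x
      have hout : ∑ b, (Pi.single u (Pi.single v 1) : V → V → ℕ) x b
          = (Pi.single u 1 : V → ℕ) x := by
        rcases eq_or_ne x u with rfl | hx <;> simp [*]
      have hin : ∑ a, (Pi.single u (Pi.single v 1) : V → V → ℕ) a x
          = (Pi.single v 1 : V → ℕ) x := by
        rw [Fintype.sum_eq_single u fun a ha => by simp [ha], Pi.single_eq_same]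
      have hdouble : (Pi.single u (2 * 1) : V → ℕ) x = 2 * (Pi.single u 1 : V → ℕ) x := by
        simp [Pi.single_apply]
      have := hbal x
      simp only [Pi.add_apply, sum_add_distrib, hout, hin] at hmv ⊢
      lia

end Moves

section Weights

variable {V : Type*} [Fintype V] {G : SimpleGraph V} {c : V → ℕ} {r : V} {w : V → ℕ}

/-- A weight function for the root `r`, as in Hurlbert's weight function lemma: every vertex of
positive weight has a neighbor (its parent in a forest of strategies) which is either the root or
at least twice as heavy. -/
abbrev IsWeightFunction (G : SimpleGraph V) (r : V) (w : V → ℕ) : Prop :=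
  w r = 0 ∧ ∀ v, 0 < w v → ∃ u, G.Adj v u ∧ (u = r ∨ 2 * w v ≤ w u)

-- Moving towards the parent never decreases the weight of the configuration, and a vertex of
-- positive weight carrying two pebbles exists as long as the weight exceeds that of the all-ones
-- configuration.
lemma IsWeightFunction.solvable (hw : IsWeightFunction G r w) (h : ∑ v, w v < ∑ v, w v * c v) :
    Solvable G c r := by
  classical
  induction hN : ∑ v, c v using Nat.strong_induction_on generalizing c with
  | _ N ih =>
    obtain ⟨v, -, hv⟩ := exists_lt_of_sum_lt h
    have hw0 : 0 < w v := by by_contra! h0; simp_all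
    have hc2 : 2 * 1 ≤ c v := (Nat.lt_mul_iff_one_lt_right hw0).1 hv
    obtain ⟨u, hvu, hu⟩ := hw.2 v hw0
    have hsize := sum_moveMany hvu.ne hc2
    have hweight := sum_mul_moveMany w hvu.ne hc2
    refine NSolvable.of_moveMany (m := 1) ?_ hvu hc2
    rcases hu with rfl | hu
    · exact solvable_of_pos (by simp [moveMany, hvu.ne'])
    · exact ih _ (by lia) (by lia) rfl

theorem solvable_of_weightFunctions {ι : Type*} [Fintype ι] {w : ι → V → ℕ} {q n : ℕ}
    (hw : ∀ i, IsWeightFunction G r (w i)) (hq : ∀ v, v ≠ r → q ≤ ∑ i, w i v)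
    (hn : ∑ i, ∑ v, w i v < q * n) (hc : n ≤ ∑ v, c v) : Solvable G c r := by
  by_contra hns
  have hr : c r = 0 := by by_contra h; exact hns (solvable_of_pos (Nat.pos_of_ne_zero h))
  refine hn.not_ge ?_
  calc q * n ≤ ∑ v, q * c v := by rw [← mul_sum]; gcongr
    _ ≤ ∑ v, (∑ i, w i v) * c v := by
      refine sum_le_sum fun v _ => ?_
      rcases eq_or_ne v r with rfl | hv
      · simp [hr]
      · gcongr; exact hq v hv
    _ = ∑ i, ∑ v, w i v * c v := by simp only [sum_mul]; exact sum_comm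
    _ ≤ ∑ i, ∑ v, w i v := sum_le_sum fun i _ => not_lt.1 fun h => hns ((hw i).solvable h)

end Weights

section PebblingNumber

variable {V : Type*} [Fintype V] {G : SimpleGraph V}

lemma exists_sum_eq_not_solvable (G : SimpleGraph V) (r : V) {k : ℕ} (hk : k < Fintype.card V) :
    ∃ c : V → ℕ, ∑ v, c v = k ∧ ¬ Solvable G c r := by
  classical
  obtain ⟨s, hs, rfl⟩ : ∃ s ⊆ univ.erase r, #s = k :=
    exists_subset_card_eq (by rw [card_erase_of_mem (mem_univ r), card_univ]; lia)
  have hr : r ∉ s := fun h => by simpa using hs h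
  refine ⟨fun v => if v ∈ s then 1 else 0, by simp, ?_⟩
  rintro ⟨c', hreach, hc'⟩
  obtain rfl | ⟨d, ⟨v, -, -, hv, -⟩, -⟩ := hreach.cases_head
  · simp [hr] at hc'
  · dsimp only at hv
    split_ifs at hv <;> lia

theorem pebblingNumber_eq_card [Nonempty V]
    (h : ∀ c : V → ℕ, ∑ v, c v = Fintype.card V → ∀ r, Solvable G c r) :
    pebblingNumber G = Fintype.card V := by
  refine IsLeast.csInf_eq ⟨h, fun k hk => ?_⟩
  by_contra! hlt
  obtain ⟨c, hc, hns⟩ := exists_sum_eq_not_solvable G (Classical.arbitrary V) hlt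
  exact hns (hk c hc _)

end PebblingNumber

section SolvableWithin

variable {V : Type*} [Fintype V] {G : SimpleGraph V} {c : V → ℕ} {u v r : V} {k m : ℕ}

/-- The vertex `r` can be reached from `c` by at most `k` pebbling moves. As every move destroys
exactly one pebble, the moves are counted by the loss in size of the configuration. -/
def SolvableWithin (G : SimpleGraph V) (c : V → ℕ) (r : V) (k : ℕ) : Prop :=
  ∃ c', ReflTransGen (PebblingMove G) c c' ∧ 1 ≤ c' r ∧ ∑ v, c v ≤ ∑ v, c' v + k

namespace SolvableWithin

lemma solvable (h : SolvableWithin G c r k) : Solvable G c r :=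
  let ⟨d, hd, hr, _⟩ := h
  ⟨d, hd, hr⟩

lemma mono {l : ℕ} (h : SolvableWithin G c r k) (hkl : k ≤ l) : SolvableWithin G c r l :=
  let ⟨d, hd, hr, hs⟩ := h
  ⟨d, hd, hr, hs.trans (by gcongr)⟩

lemma of_pos (h : 1 ≤ c r) : SolvableWithin G c r 0 :=
  ⟨c, .refl, h, le_rfl⟩

lemma of_moveMany [DecidableEq V] (h : SolvableWithin G (moveMany c u v m) r k) (huv : G.Adj u v)
    (hm : 2 * m ≤ c u) : SolvableWithin G c r (m + k) := by
  obtain ⟨d, hd, hr, hs⟩ := h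
  have := sum_moveMany huv.ne hm
  exact ⟨d, (reflTransGen_moveMany huv hm).trans hd, hr, by lia⟩

lemma of_adj (h : G.Adj v r) (hc : 2 ≤ c v) : SolvableWithin G c r 1 := by
  classical
  exact of_moveMany (k := 0) (of_pos <| by simp [moveMany, h.ne']) h hc

lemma of_path {a b p : V} {i j : ℕ} (hab : G.Adj a b) (hbp : G.Adj b p) (hpr : G.Adj p r)
    (hap : a ≠ p) (ha : 2 * i ≤ c a) (hb : 2 * j ≤ c b + i) (hp : 2 ≤ c p + j) :
    SolvableWithin G c r (i + (j + 1)) := by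
  classical
  refine of_moveMany (of_moveMany (of_adj hpr ?_) hbp (m := j) ?_) hab ha
  · simpa [moveMany, hab.ne, hbp.ne', hap.symm] using hp
  · simpa [moveMany, hab.ne'] using hb

lemma of_path_two {b p : V} {j : ℕ} (hbp : G.Adj b p) (hpr : G.Adj p r)
    (hb : 2 * j ≤ c b) (hp : 2 ≤ c p + j) : SolvableWithin G c r (j + 1) := by
  classical
  exact of_moveMany (of_adj hpr <| by simpa [moveMany, hbp.ne'] using hp) hbp hb

-- The pebbles of two opposite vertices `a` and `b` of the cycle `a x b y` are distributed over `x`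
-- and `y`, then collected on the common neighbor `p` of `x` and `y`.
lemma of_four_cycle {a b x y p : V} {i₁ i₂ j₁ j₂ k l : ℕ} (hax : G.Adj a x) (hay : G.Adj a y)
    (hbx : G.Adj b x) (hby : G.Adj b y) (hxp : G.Adj x p) (hyp : G.Adj y p) (hpr : G.Adj p r)
    (hab : a ≠ b) (hxy : x ≠ y) (hap : a ≠ p) (hbp : b ≠ p) (ha : 2 * (i₁ + j₁) ≤ c a)
    (hb : 2 * (i₂ + j₂) ≤ c b) (hx : 2 * k ≤ c x + (i₁ + i₂)) (hy : 2 * l ≤ c y + (j₁ + j₂))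
    (hp : 2 ≤ c p + (k + l)) :
    SolvableWithin G c r (i₁ + (j₁ + (i₂ + (j₂ + (k + (l + 1)))))) := by
  classical
  have := hax.ne; have := hay.ne; have := hbx.ne; have := hby.ne; have := hxp.ne; have := hyp.ne
  refine of_moveMany (of_moveMany (of_moveMany (of_moveMany (of_moveMany (of_moveMany
    (of_adj hpr ?_) hyp ?_) hxp ?_) hby ?_) hbx ?_) hay ?_) hax (by lia) <;>
  simp only [moveMany, Pi.sub_apply, Pi.add_apply, Pi.single_apply] <;> grind

-- The first pebble on `r` is set aside, and the remaining `N` pebbles or more bring a second one.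
theorem nSolvable_two {N : ℕ} (hN : ∀ d : V → ℕ, N ≤ ∑ v, d v → Solvable G d r)
    (h : SolvableWithin G c r k) (hc : N + k + 1 ≤ ∑ v, c v) : NSolvable G c r 2 := by
  classical
  obtain ⟨d, hd, hr, hs⟩ := h
  have hle : (Pi.single r 1 : V → ℕ) ≤ d := fun x => by
    rcases eq_or_ne x r with rfl | hx <;> simp [*]
  obtain ⟨e, rfl⟩ := le_iff_exists_add'.1 hle
  simp only [Pi.add_apply, sum_add_distrib, sum_pi_single', mem_univ, if_true] at hs
  obtain ⟨e', he, her⟩ := hN e (by lia)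
  exact ⟨_, hd.trans (reflTransGen_pebblingMove_add_right he _), by simpa using her⟩

end SolvableWithin

section NotSolvableWithin

variable (h : ¬ SolvableWithin G c r k)

include h

lemma eq_zero_of_not_solvableWithin : c r = 0 := by
  by_contra h0
  exact h ((SolvableWithin.of_pos <| Nat.pos_of_ne_zero h0).mono k.zero_le)

lemma le_one_of_not_solvableWithin (hk : 1 ≤ k) (hvr : G.Adj v r) : c v ≤ 1 := by
  by_contra! hv
  exact h ((SolvableWithin.of_adj hvr hv).mono hk)

lemma le_three_of_not_solvableWithin (hk : 3 ≤ k) (hvu : G.Adj v u) (hur : G.Adj u r) :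
    c v ≤ 3 := by
  by_contra! hv
  exact h ((SolvableWithin.of_path_two (j := 2) hvu hur hv (by lia)).mono hk)

theorem sum_le_of_not_solvableWithin [DecidableEq V] [DecidableRel G.Adj]
    (hk : 3 ≤ k) (hdiam : ∀ v, v ≠ r → ¬ G.Adj v r → ∃ u, G.Adj v u ∧ G.Adj u r) :
    ∑ v, c v ≤ #{v | 1 ≤ c v} + 2 * #{v | v ≠ r ∧ ¬ G.Adj v r} := by
  simp only [card_filter, mul_sum, ← sum_add_distrib]
  refine sum_le_sum fun v _ => ?_
  by_cases hvr : v = r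
  · simp [hvr, eq_zero_of_not_solvableWithin h]
  by_cases hadj : G.Adj v r
  · have := le_one_of_not_solvableWithin h (by lia) hadj
    simp only [hadj, not_true, and_false, if_false]
    split_ifs <;> lia
  · obtain ⟨u, hvu, hur⟩ := hdiam v hvr hadj
    have := le_three_of_not_solvableWithin h hk hvu hur
    simp only [hvr, hadj, ne_eq, not_false_eq_true, and_self, if_true]
    split_ifs <;> lia

end NotSolvableWithin

end SolvableWithin

lemma card_filter_one_le_eq_sum_min {V : Type*} [Fintype V] (c : V → ℕ) :
    #{v | 1 ≤ c v} = ∑ v, min (c v) 1 := by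
  rw [card_filter]
  exact sum_congr rfl fun v _ => by split_ifs <;> lia

section Lemke

variable {c : Fin 8 → ℕ} {r u v : Fin 8}

instance : DecidableRel lemkeL.Adj :=
  inferInstanceAs (DecidableRel (SimpleGraph.fromRel _).Adj)

-- The weight functions come from linear programming.
lemma lemkeL_solvable_of_ne_zero (hr : r ≠ 0) (hc : 8 ≤ ∑ v, c v) : Solvable lemkeL c r := by
  fin_cases r
  · exact absurd rfl hr
  · exact solvable_of_weightFunctions (q := 7)
      (w := ![![0, 0, 3, 12, 5, 6, 6, 6], ![8, 0, 4, 0, 2, 1, 1, 1]])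
      (by decide) (by decide) (by decide) hc
  · exact solvable_of_weightFunctions (q := 3)
      (w := ![![0, 1, 0, 2, 0, 4, 0, 2], ![4, 2, 0, 1, 3, 0, 3, 1]])
      (by decide) (by decide) (by decide) hc
  · exact solvable_of_weightFunctions (q := 3)
      (w := ![![1, 0, 2, 0, 0, 0, 4, 0], ![2, 4, 1, 0, 3, 3, 0, 3]])
      (by decide) (by decide) (by decide) hc
  · exact solvable_of_weightFunctions (q := 3)
      (w := ![![2, 1, 4, 0, 0, 1, 1, 0], ![1, 2, 0, 4, 0, 2, 2, 3]])
      (by decide) (by decide) (by decide) hc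
  · exact solvable_of_weightFunctions (q := 3)
      (w := ![![2, 1, 4, 0, 1, 0, 1, 0], ![1, 2, 0, 4, 2, 0, 2, 3]])
      (by decide) (by decide) (by decide) hc
  · exact solvable_of_weightFunctions (q := 3)
      (w := ![![2, 1, 4, 0, 1, 1, 0, 0], ![1, 2, 0, 4, 2, 2, 0, 3]])
      (by decide) (by decide) (by decide) hc
  · exact solvable_of_weightFunctions (q := 12)
      (w := ![![4, 9, 0, 18, 0, 0, 0, 0], ![3, 1, 6, 0, 12, 0, 0, 0],
        ![3, 1, 6, 0, 0, 12, 0, 0], ![2, 1, 4, 0, 0, 0, 12, 0]])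
      (by decide) (by decide) (by decide) hc

lemma lemkeL_adj_of_mem :
    ∀ u ∈ ({4, 5, 6} : Finset _), lemkeL.Adj 3 u ∧ lemkeL.Adj 7 u ∧ lemkeL.Adj u 2 := by
  decide

lemma lemkeL_solvableWithin_zero_of_four_cycle {i j k l : ℕ} (huv : (u, v) ∈ offDiag {4, 5, 6})
    (hij : i + j ≤ c 3 / 2 + c 7 / 2) (hk : 2 * k ≤ c u + i) (hl : 2 * l ≤ c v + j)
    (h2 : 2 ≤ c 2 + k + l) :
    SolvableWithin lemkeL c 0 (i + j + k + l + 1) := by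
  obtain ⟨hu, hv, huv⟩ := mem_offDiag.1 huv
  obtain ⟨h3u, h7u, hu2⟩ := lemkeL_adj_of_mem u hu
  obtain ⟨h3v, h7v, hv2⟩ := lemkeL_adj_of_mem v hv
  refine (SolvableWithin.of_four_cycle (k := k) (l := l)
    (i₁ := min i (c 3 / 2)) (i₂ := i - c 3 / 2)
    (j₁ := min j (c 3 / 2 - i)) (j₂ := j - (c 3 / 2 - i))
    h3u h3v h7u h7v hu2 hv2 (by decide) (by decide) huv (by decide) (by decide)
    ?_ ?_ ?_ ?_ ?_).mono ?_ <;> lia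

lemma lemkeL_solvable_zero (hc : 8 ≤ ∑ v, c v) : Solvable lemkeL c 0 := by
  by_contra hns
  have h0 : c 0 = 0 := by by_contra h; exact hns (solvable_of_pos <| Nat.pos_of_ne_zero h)
  have hw : IsWeightFunction lemkeL 0 ![0, 8, 0, 4, 1, 1, 1, 2] := by decide
  have hweight : 8 * c 1 + 4 * c 3 + c 4 + c 5 + c 6 + 2 * c 7 ≤ 17 := by
    simpa [Fin.sum_univ_eight] using not_lt.1 fun h => hns (hw.solvable h)
  have hdirect {u v} (huv : (u, v) ∈ offDiag {4, 5, 6}) : c 2 + c u / 2 + c v / 2 ≤ 1 := by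
    by_contra! h
    exact hns (lemkeL_solvableWithin_zero_of_four_cycle
      (i := 0) (j := 0) (k := c u / 2) (l := c v / 2)
      huv (by lia) (by lia) (by lia) (by lia)).solvable
  -- Choosing `i` with the parity of `c u` makes the pile on `u` even, so that at most one pebble of
  -- the cycle is left unpaired.
  have hcycle {u v} (huv : (u, v) ∈ offDiag {4, 5, 6}) (hm : 1 ≤ c 3 / 2 + c 7 / 2) :
      c u + c v + (c 3 / 2 + c 7 / 2) + 2 * c 2 ≤ 3 := by
    by_contra! h
    exact hns (lemkeL_solvableWithin_zero_of_four_cycle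
      (i := c u % 2) (j := c 3 / 2 + c 7 / 2 - c u % 2)
      (k := (c u + c u % 2) / 2) (l := (c v + (c 3 / 2 + c 7 / 2 - c u % 2)) / 2)
      huv (by lia) (by lia) (by lia) (by lia)).solvable
  have := hdirect (u := 4) (v := 5) (by decide)
  have := hdirect (u := 4) (v := 6) (by decide)
  have := hdirect (u := 5) (v := 6) (by decide)
  have := hcycle (u := 4) (v := 5) (by decide)
  have := hcycle (u := 4) (v := 6) (by decide)
  have := hcycle (u := 5) (v := 6) (by decide)
  rw [Fin.sum_univ_eight] at hc
  rcases Nat.eq_zero_or_pos (c 3 / 2 + c 7 / 2) with hm | hm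
  · have : c 4 + c 5 + c 6 + 2 * c 2 ≤ 5 := by lia
    lia
  · have : 2 * (c 4 + c 5 + c 6) + 3 * (c 3 / 2 + c 7 / 2) + 6 * c 2 ≤ 9 := by lia
    lia

lemma lemkeL_solvable (hc : 8 ≤ ∑ v, c v) (r : Fin 8) : Solvable lemkeL c r := by
  rcases eq_or_ne r 0 with rfl | hr
  · exact lemkeL_solvable_zero hc
  · exact lemkeL_solvable_of_ne_zero hr hc

lemma lemkeL_solvableWithin_of_mem_Icc (hs : #{v | 1 ≤ c v} = 5) (hc : 14 ≤ ∑ v, c v)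
    (hr : r ∈ Icc 2 6) : SolvableWithin lemkeL c r 3 := by
  have hdiam : ∀ r ∈ Icc (2 : Fin 8) 6, ∀ v, v ≠ r → ¬ lemkeL.Adj v r →
      ∃ u, lemkeL.Adj v u ∧ lemkeL.Adj u r := by decide
  have hfar : ∀ r ∈ Icc (2 : Fin 8) 6, #{v | v ≠ r ∧ ¬ lemkeL.Adj v r} ≤ 4 := by decide
  by_contra hns
  have := hfar r hr
  have := sum_le_of_not_solvableWithin hns le_rfl (hdiam r hr)
  lia

lemma lemkeL_solvableWithin_one (hs : #{v | 1 ≤ c v} = 5) (hc : 14 ≤ ∑ v, c v) :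
    SolvableWithin lemkeL c 1 3 := by
  by_contra hns
  have hnear {v} := le_one_of_not_solvableWithin (v := v) hns (by lia)
  have hfar {v u} := le_three_of_not_solvableWithin (v := v) (u := u) hns le_rfl
  have := eq_zero_of_not_solvableWithin hns
  have := hnear (v := 0) (by decide)
  have := hnear (v := 3) (by decide)
  have := hfar (v := 2) (u := 0) (by decide) (by decide)
  have := hfar (v := 4) (u := 3) (by decide) (by decide)
  have := hfar (v := 5) (u := 3) (by decide) (by decide)
  have := hfar (v := 6) (u := 3) (by decide) (by decide)
  have := hfar (v := 7) (u := 3) (by decide) (by decide)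
  rw [card_filter_one_le_eq_sum_min, Fin.sum_univ_eight] at hs
  rw [Fin.sum_univ_eight] at hc
  have h4 : 2 ≤ c 4 := by lia
  have h5 : 2 ≤ c 5 := by lia
  refine hns (.of_moveMany (u := 4) (v := 3) (m := 1) (k := 2) ?_ (by decide) h4)
  exact .of_path_two (b := 5) (p := 3) (j := 1) (by decide) (by decide) h5 (by simp [moveMany])

lemma lemkeL_solvableWithin_zero (hs : #{v | 1 ≤ c v} = 5) (hc : 14 ≤ ∑ v, c v) :
    SolvableWithin lemkeL c 0 5 := by
  by_contra hns
  rw [card_filter_one_le_eq_sum_min, Fin.sum_univ_eight] at hs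
  rw [Fin.sum_univ_eight] at hc
  have h0 := eq_zero_of_not_solvableWithin hns
  have h1 : c 1 ≤ 1 := le_one_of_not_solvableWithin hns (by lia) (by decide)
  have h2 : c 2 ≤ 1 := le_one_of_not_solvableWithin hns (by lia) (by decide)
  have h3 : c 3 ≤ 3 := le_three_of_not_solvableWithin (u := 1) hns (by lia) (by decide) (by decide)
  have hmid {u} (hu : u ∈ ({4, 5, 6} : Finset _)) : c u ≤ 3 :=
    le_three_of_not_solvableWithin (u := 2) hns (by lia) (lemkeL_adj_of_mem u hu).2.2 (by decide)
  have hpair {u v} (huv : (u, v) ∈ offDiag {4, 5, 6}) : c u ≤ 1 ∨ c v ≤ 1 := by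
    by_contra! h
    exact hns ((lemkeL_solvableWithin_zero_of_four_cycle (i := 0) (j := 0) (k := 1) (l := 1) huv
      (by lia) (by lia) (by lia) (by lia)).mono (by lia))
  have h7 : 4 ≤ c 7 := by
    have := hmid (u := 4) (by decide)
    have := hmid (u := 5) (by decide)
    have := hmid (u := 6) (by decide)
    have := hpair (u := 4) (v := 5) (by decide)
    have := hpair (u := 4) (v := 6) (by decide)
    have := hpair (u := 5) (v := 6) (by decide)
    lia
  have hpair_zero {u v} (huv : (u, v) ∈ offDiag {4, 5, 6}) : c u = 0 ∨ c v = 0 := by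
    by_contra! h
    exact hns (lemkeL_solvableWithin_zero_of_four_cycle (i := 1) (j := 1) (k := 1) (l := 1) huv
      (by lia) (by lia) (by lia) (by lia))
  have hedge : c 1 = 0 ∨ c 3 = 0 := by
    by_contra! h
    exact hns ((SolvableWithin.of_path (a := 7) (b := 3) (p := 1) (i := 1) (j := 1)
      (by decide) (by decide) (by decide) (by decide) (by lia) (by lia) (by lia)).mono (by lia))
  have := hpair_zero (u := 4) (v := 5) (by decide)
  have := hpair_zero (u := 4) (v := 6) (by decide)
  have := hpair_zero (u := 5) (v := 6) (by decide)
  have : min (c 4) 1 + min (c 5) 1 + min (c 6) 1 ≤ 1 := by lia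
  have : min (c 1) 1 + min (c 3) 1 ≤ 1 := by lia
  lia

lemma lemkeL_solvableWithin_seven (hs : #{v | 1 ≤ c v} = 5) (hc : 14 ≤ ∑ v, c v) :
    SolvableWithin lemkeL c 7 5 := by
  by_contra hns
  rw [card_filter_one_le_eq_sum_min, Fin.sum_univ_eight] at hs
  rw [Fin.sum_univ_eight] at hc
  have hnear {v} := le_one_of_not_solvableWithin (v := v) hns (by lia)
  have hfar {v u} := le_three_of_not_solvableWithin (v := v) (u := u) hns (by lia)
  have := eq_zero_of_not_solvableWithin hns
  have := hfar (v := 1) (u := 3) (by decide) (by decide)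
  have := hfar (v := 2) (u := 4) (by decide) (by decide)
  have := hnear (v := 3) (by decide)
  have := hnear (v := 4) (by decide)
  have := hnear (v := 5) (by decide)
  have := hnear (v := 6) (by decide)
  have h0 : 4 ≤ c 0 := by lia
  have hpath {b p} (h : lemkeL.Adj 0 b ∧ lemkeL.Adj b p ∧ lemkeL.Adj p 7 ∧ 0 ≠ p) : c b ≤ 1 := by
    by_contra hb
    exact hns (.of_path (i := 2) (j := 2) h.1 h.2.1 h.2.2.1 h.2.2.2 h0 (by lia) (by lia))
  have hpath' {p} (h : lemkeL.Adj 2 p ∧ lemkeL.Adj p 7 ∧ 0 ≠ p) : c p = 0 := by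
    by_contra hp
    exact hns ((SolvableWithin.of_path (a := 0) (b := 2) (i := 2) (j := 1) (by decide) h.1 h.2.1
      h.2.2 h0 (by lia) (by lia)).mono (by lia))
  have := hpath (b := 1) (p := 3) (by decide)
  have := hpath (b := 2) (p := 4) (by decide)
  have := hpath' (p := 4) (by decide)
  have := hpath' (p := 5) (by decide)
  have := hpath' (p := 6) (by decide)
  lia

lemma lemkeL_solvableWithin (hs : #{v | 1 ≤ c v} = 5) (hc : 14 ≤ ∑ v, c v) (r : Fin 8) :
    SolvableWithin lemkeL c r 5 := by
  obtain rfl | rfl | hr | rfl : r = 0 ∨ r = 1 ∨ r ∈ Icc 2 6 ∨ r = 7 := by decide +revert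
  · exact lemkeL_solvableWithin_zero hs hc
  · exact (lemkeL_solvableWithin_one hs hc).mono (by lia)
  · exact (lemkeL_solvableWithin_of_mem_Icc hs hc hr).mono (by lia)
  · exact lemkeL_solvableWithin_seven hs hc

lemma lemkeL_not_nSolvable_two : ¬ NSolvable lemkeL ![0, 0, 0, 1, 1, 1, 1, 9] 0 2 := by
  rintro ⟨d, hd, hd0⟩
  -- With weights `2 ^ (3 - dist v 0)` the initial weight is 17, two pebbles on the root weigh 16,
  -- and a move that is not directed towards the root wastes at least 2.
  obtain ⟨n, hn, hbal⟩ := exists_tight_flow (w := ![8, 4, 4, 2, 2, 2, 2, 1]) (t := 2)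
    (by decide) hd (by simp only [Fin.sum_univ_eight, Matrix.cons_val]; lia)
  have h0 := hbal 0
  have h1 := hbal 1
  have h2 := hbal 2
  have h3 := hbal 3
  have h4 := hbal 4
  have h5 := hbal 5
  have h6 := hbal 6
  have h7 := hbal 7
  simp (disch := decide) only [Fin.sum_univ_eight, hn, Matrix.cons_val, zero_add, add_zero,
    mul_zero] at h0 h1 h2 h3 h4 h5 h6 h7
  -- Piles `3`, …, `6` are odd, so each of them needs a pebble from `7` to become fully usable, but
  -- `7` holds only four pairs.
  have : n 7 3 + n 7 4 + n 7 5 + n 7 6 ≤ 4 := by lia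
  obtain hall | hone | hnone : 2 ≤ n 1 0 ∨ n 1 0 = 1 ∨ n 1 0 = 0 := by lia
  · have : 7 ≤ n 7 3 := by lia
    lia
  · have : 3 ≤ n 7 3 := by lia
    have : n 4 2 + n 5 2 + n 6 2 ≤ 1 := by lia
    lia
  · have : 4 ≤ n 4 2 + n 5 2 + n 6 2 := by lia
    lia

theorem lemkeL_pebblingNumber : pebblingNumber lemkeL = 8 :=
  pebblingNumber_eq_card fun _ hc r => lemkeL_solvable hc.ge r

theorem lemkeL_twoPebblingNumber : twoPebblingNumber lemkeL 5 = 14 := by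
  refine IsLeast.csInf_eq ⟨fun r c hc hs => ?_, fun m hm => ?_⟩
  · exact (lemkeL_solvableWithin hs hc r).nSolvable_two (fun d hd => lemkeL_solvable hd r) hc
  · by_contra! hlt
    exact lemkeL_not_nSolvable_two (hm 0 _ ((Nat.le_of_lt_succ hlt).trans (by decide)) (by decide))

end Lemke

/-- the Lemke graph satisfies `π(L) = 8` and `π₂(L, 5) = 14 > 12 =
2π(L) - 5 + 1`; consequently `L` does not have the 2-pebbling property. -/
theorem stmt16 :
    pebblingNumber lemkeL = 8 ∧
    twoPebblingNumber lemkeL 5 = 14 ∧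
    2 * pebblingNumber lemkeL - 5 + 1 = 12 ∧
    12 < twoPebblingNumber lemkeL 5 ∧
    ¬ HasTwoPebblingProperty lemkeL := by
  refine ⟨lemkeL_pebblingNumber, lemkeL_twoPebblingNumber, ?_, ?_, fun h => ?_⟩
  · rw [lemkeL_pebblingNumber]
  · rw [lemkeL_twoPebblingNumber]
    norm_num
  · have hle := h 5 (by norm_num) (by simp)
    rw [lemkeL_pebblingNumber, lemkeL_twoPebblingNumber] at hle
    lia
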